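/- arXiv:2110.01026 — 5 statements merged into one kernel-verified Lean document; each statement's English description precedes it below -/
import Mathlib

section
/- Let R be a commutative ring, n ≥ 1, M an n×n matrix over R with rows and columns indexed by {1,...,n}, and let k be an integer with 1 ≤ k ≤ n. Then det(M) · det(M[{k+1,...,n},{k+1,...,n}])^{k-1} = Σ_{σ ∈ S_k} sign(σ) · Π_{i=1}^{k} det(M[{i,k+1,...,n},{σ(i),k+1,...,n}]), where by convention the determinant of the empty (0×0) matrix is 1. -/
/-- The matrix of bordered minors. -/
def dmBorder {m p R : Type*} [CommRing R] [Fintype p] [DecidableEq p]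
    (M : Matrix (m ⊕ p) (m ⊕ p) R) : Matrix m m R :=
  Matrix.of fun i j => (M.submatrix (Sum.elim (fun _ : Unit => Sum.inl i) Sum.inr)
    (Sum.elim (fun _ : Unit => Sum.inl j) Sum.inr)).det

theorem dm_field {m p R : Type*} [CommRing R] [Fintype m] [DecidableEq m] [Nonempty m]
    [Fintype p] [DecidableEq p] (M : Matrix (m ⊕ p) (m ⊕ p) R) (hD : IsUnit M.toBlocks₂₂.det) :
    M.det * M.toBlocks₂₂.det ^ (Fintype.card m - 1) = (dmBorder M).det := by
  letI : Invertible M.toBlocks₂₂ := Matrix.invertibleOfIsUnitDet _ hD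
  have h1 : dmBorder M = M.toBlocks₂₂.det •
      (M.toBlocks₁₁ - M.toBlocks₁₂ * ⅟ M.toBlocks₂₂ * M.toBlocks₂₁) := by
    ext i j
    have : M.submatrix (Sum.elim (fun _ : Unit => Sum.inl i) Sum.inr)
      (Sum.elim (fun _ : Unit => Sum.inl j) Sum.inr) =
      Matrix.fromBlocks (Matrix.of fun _ _ => M.toBlocks₁₁ i j)
        (Matrix.of fun _ b => M.toBlocks₁₂ i b) (Matrix.of fun a _ => M.toBlocks₂₁ a j)
        M.toBlocks₂₂ := by
      ext a b
      rcases a with a | a <;> rcases b with b | b <;> rfl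
    simp only [dmBorder, Matrix.of_apply]
    rw [this, Matrix.det_fromBlocks₂₂, Matrix.det_unique (n := Unit)]
    simp [Matrix.mul_apply]
  have h2 : M.det = M.toBlocks₂₂.det *
      (M.toBlocks₁₁ - M.toBlocks₁₂ * ⅟ M.toBlocks₂₂ * M.toBlocks₂₁).det := by
    conv_lhs => rw [← Matrix.fromBlocks_toBlocks M]
    exact Matrix.det_fromBlocks₂₂ _ _ _ _
  rw [h1, h2, Matrix.det_smul]
  obtain ⟨c, hc⟩ : ∃ c, Fintype.card m = c + 1 := ⟨_, (Nat.succ_pred Fintype.card_ne_zero).symm⟩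
  rw [hc, Nat.add_sub_cancel]
  ring

theorem dmBorder_map {m p R S : Type*} [CommRing R] [CommRing S] [Fintype p] [DecidableEq p]
    (f : R →+* S) (M : Matrix (m ⊕ p) (m ⊕ p) R) :
    dmBorder (M.map f) = (dmBorder M).map f := by
  ext i j
  simp only [dmBorder, Matrix.of_apply, Matrix.map_apply]
  rw [RingHom.map_det]
  rfl

theorem dm_map {m p R S : Type*} [CommRing R] [CommRing S] [Fintype m] [DecidableEq m]
    [Fintype p] [DecidableEq p] (f : R →+* S) (M : Matrix (m ⊕ p) (m ⊕ p) R) (c : ℕ) :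
    (M.map f).det * (M.map f).toBlocks₂₂.det ^ c - (dmBorder (M.map f)).det =
      f (M.det * M.toBlocks₂₂.det ^ c - (dmBorder M).det) := by
  rw [dmBorder_map, map_sub, map_mul, map_pow, RingHom.map_det, RingHom.map_det, RingHom.map_det]
  rfl

theorem dm_gen {m p R : Type*} [CommRing R] [Fintype m] [DecidableEq m] [Nonempty m]
    [Fintype p] [DecidableEq p] (M : Matrix (m ⊕ p) (m ⊕ p) R) :
    M.det * M.toBlocks₂₂.det ^ (Fintype.card m - 1) = (dmBorder M).det := by
  let X := Matrix.mvPolynomialX (m ⊕ p) (m ⊕ p) ℤ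
  let P := MvPolynomial ((m ⊕ p) × (m ⊕ p)) ℤ
  have hne : X.toBlocks₂₂.det ≠ 0 := by
    intro h
    let g : P →+* ℤ := MvPolynomial.eval₂Hom (RingHom.id ℤ)
      fun q => (1 : Matrix (m ⊕ p) (m ⊕ p) ℤ) q.1 q.2
    have h' := congrArg g h
    rw [RingHom.map_det, map_zero] at h'
    have h1 : g.mapMatrix X.toBlocks₂₂ = 1 := by
      ext i j
      have : g (MvPolynomial.X (Sum.inr i, Sum.inr j)) =
          (1 : Matrix (m ⊕ p) (m ⊕ p) ℤ) (Sum.inr i) (Sum.inr j) :=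
        MvPolynomial.eval₂_X _ _ _
      refine this.trans ?_
      simp [Matrix.one_apply]
    rw [h1, Matrix.det_one] at h'
    exact one_ne_zero h'
  have hX : X.det * X.toBlocks₂₂.det ^ (Fintype.card m - 1) - (dmBorder X).det = 0 := by
    apply IsFractionRing.injective P (FractionRing P)
    rw [map_zero, ← dm_map, sub_eq_zero]
    apply dm_field
    rw [isUnit_iff_ne_zero]
    have : (X.map (algebraMap P (FractionRing P))).toBlocks₂₂.det =
        algebraMap P (FractionRing P) X.toBlocks₂₂.det := by
      rw [RingHom.map_det]; rfl
    rw [this]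
    intro h0
    exact hne (IsFractionRing.injective P (FractionRing P) (by rw [h0, map_zero]))
  have hM : X.map (MvPolynomial.eval₂Hom (Int.castRingHom R) fun q => M q.1 q.2) = M :=
    Matrix.mvPolynomialX_map_eval₂ _ _
  rw [← sub_eq_zero, ← hM, dm_map, hX, map_zero]

theorem dodgson_muir {R : Type*} [CommRing R] (n k : ℕ) (hn : 1 ≤ n)
    (hk : 1 ≤ k) (hkn : k ≤ n) (M : Matrix (Fin n) (Fin n) R) :
    M.det *
      (M.submatrix
        (fun j : Fin (n - k) => (⟨(j : ℕ) + k, by have := j.isLt; omega⟩ : Fin n))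
        (fun j : Fin (n - k) => (⟨(j : ℕ) + k, by have := j.isLt; omega⟩ : Fin n))).det
        ^ (k - 1) =
    ∑ σ : Equiv.Perm (Fin k),
      (Equiv.Perm.sign σ : ℤ) •
        ∏ i : Fin k,
          (M.submatrix
            (Sum.elim (fun _ : Unit => (⟨(i : ℕ), by have := i.isLt; omega⟩ : Fin n))
              (fun j : Fin (n - k) => (⟨(j : ℕ) + k, by have := j.isLt; omega⟩ : Fin n)))
            (Sum.elim (fun _ : Unit => (⟨(σ i : ℕ), by have := (σ i).isLt; omega⟩ : Fin n))
              (fun j : Fin (n - k) => (⟨(j : ℕ) + k, by have := j.isLt; omega⟩ : Fin n)))).det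
    := by
  haveI : Nonempty (Fin k) := ⟨⟨0, hk⟩⟩
  let e : Fin k ⊕ Fin (n - k) ≃ Fin n :=
    finSumFinEquiv.trans (finCongr (by omega))
  have hl : ∀ i : Fin k, e (Sum.inl i) = ⟨(i : ℕ), by have := i.isLt; omega⟩ := by
    intro i; ext; simp [e]
  have hr : ∀ j : Fin (n - k), e (Sum.inr j) = ⟨(j : ℕ) + k, by have := j.isLt; omega⟩ := by
    intro j; ext; simp [e]; try omega
  have key := dm_gen (M.submatrix e e)
  rw [Matrix.det_submatrix_equiv_self, Fintype.card_fin] at key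
  have h22 : (M.submatrix e e).toBlocks₂₂ = M.submatrix
        (fun j : Fin (n - k) => (⟨(j : ℕ) + k, by have := j.isLt; omega⟩ : Fin n))
        (fun j : Fin (n - k) => (⟨(j : ℕ) + k, by have := j.isLt; omega⟩ : Fin n)) := by
    ext a b
    simp only [Matrix.toBlocks₂₂, Matrix.of_apply, Matrix.submatrix_apply, hr]
  rw [h22] at key
  rw [key, ← Matrix.det_transpose, Matrix.det_apply]
  refine Finset.sum_congr rfl fun σ _ => ?_
  rw [Units.smul_def]
  congr 1
  refine Finset.prod_congr rfl fun i _ => ?_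
  simp only [dmBorder, Matrix.transpose_apply, Matrix.of_apply]
  congr 1
  ext a b
  rcases a with a | a <;> rcases b with b | b <;>
    simp only [Matrix.submatrix_apply, Sum.elim_inl, Sum.elim_inr, hl, hr]
end

section
/- Let R be a commutative ring, n ≥ 2, and M an n×n matrix over R with rows and columns indexed by {1,...,n}. Then det(M) · det(M[{3,...,n},{3,...,n}]) = det(M[{1,3,...,n},{1,3,...,n}]) · det(M[{2,3,...,n},{2,3,...,n}]) − det(M[{1,3,...,n},{2,3,...,n}]) · det(M[{2,3,...,n},{1,3,...,n}]), where by convention the determinant of the empty (0×0) matrix is 1. (This is the k = 2 case of the Dodgson/Muir identity, i.e., Dodgson's identity.) -/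
/-!
STATEMENT 1: Dodgson's identity (the `k = 2` case of the Dodgson/Muir identity).

Rows and columns of `M` are indexed by the paper's `{1, ..., n}`; paper index `t`
corresponds to the `Fin n` element `t - 1`.  The submatrix `M[{3,...,n}, {3,...,n}]`
is realized on `Fin (n-2)` via `j ↦ j + 2`, and for `a, b ∈ {1, 2}` the submatrix
`M[{a,3,...,n}, {b,3,...,n}]` (rows/columns in increasing order) is realized on
`Unit ⊕ Fin (n-2)`, the `Unit` index being the special (smallest) row `a` / column `b`.
-/

/-- The submatrix `M[{a,3,...,n}, {b,3,...,n}]` for `a, b ∈ {1,2}` (0-indexed: `a, b ∈ Fin 2`),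
rows and columns taken in increasing order. -/
def dodgsonSub {R : Type*} [CommRing R] (n : ℕ) (hn : 2 ≤ n) (M : Matrix (Fin n) (Fin n) R)
    (a b : Fin 2) : Matrix (Unit ⊕ Fin (n - 2)) (Unit ⊕ Fin (n - 2)) R :=
  M.submatrix
    (Sum.elim (fun _ => (⟨(a : ℕ), by have := a.isLt; omega⟩ : Fin n))
      (fun j => (⟨(j : ℕ) + 2, by have := j.isLt; omega⟩ : Fin n)))
    (Sum.elim (fun _ => (⟨(b : ℕ), by have := b.isLt; omega⟩ : Fin n))
      (fun j => (⟨(j : ℕ) + 2, by have := j.isLt; omega⟩ : Fin n)))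

theorem dodgson_aux1 {R k m : Type*} [CommRing R] [Fintype k] [DecidableEq k] [Fintype m]
    [DecidableEq m] (A : Matrix k k R) (B : Matrix k m R) (C : Matrix m k R) (D : Matrix m m R) :
    (Matrix.fromBlocks A B C D).det * D.det ^ Fintype.card k =
      (D.det • A - B * D.adjugate * C).det * D.det := by
  have h : Matrix.fromBlocks A B C D *
      Matrix.fromBlocks (D.det • (1 : Matrix k k R)) 0 (-(D.adjugate * C)) (1 : Matrix m m R) =
      Matrix.fromBlocks (D.det • A - B * D.adjugate * C) B 0 D := by
    rw [Matrix.fromBlocks_multiply]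
    congr 1
    · simp [Matrix.mul_assoc, sub_eq_add_neg]
    · simp
    · rw [Matrix.mul_neg, ← Matrix.mul_assoc, Matrix.mul_adjugate]
      simp
    · simp
  have h2 := congrArg Matrix.det h
  rw [Matrix.det_mul, Matrix.det_fromBlocks_zero₁₂, Matrix.det_fromBlocks_zero₂₁] at h2
  simpa [Matrix.det_smul] using h2

/-- The bordered matrix with special row `a` and column `b`. -/
def dodgsonBorder {R m : Type*} (A : Matrix (Fin 2) (Fin 2) R)
    (B : Matrix (Fin 2) m R) (C : Matrix m (Fin 2) R) (D : Matrix m m R) (a b : Fin 2) :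
    Matrix (Unit ⊕ m) (Unit ⊕ m) R :=
  Matrix.fromBlocks (A.submatrix (fun _ => a) (fun _ => b)) (B.submatrix (fun _ => a) id)
    (C.submatrix id (fun _ => b)) D

theorem dodgson_aux2 {R m : Type*} [CommRing R] [Fintype m]
    [DecidableEq m] (A : Matrix (Fin 2) (Fin 2) R) (B : Matrix (Fin 2) m R)
    (C : Matrix m (Fin 2) R) (D : Matrix m m R) (hD : IsRegular D.det) :
    (Matrix.fromBlocks A B C D).det * D.det =
      (dodgsonBorder A B C D 0 0).det * (dodgsonBorder A B C D 1 1).det -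
      (dodgsonBorder A B C D 0 1).det * (dodgsonBorder A B C D 1 0).det := by
  have h1 : ∀ a b, (dodgsonBorder A B C D a b).det = (D.det • A - B * D.adjugate * C) a b := by
    intro a b
    apply hD.right
    have := dodgson_aux1 (A.submatrix (fun _ : Unit => a) (fun _ : Unit => b))
      (B.submatrix (fun _ => a) id) (C.submatrix id (fun _ => b)) D
    simp only [Fintype.card_unit, pow_one] at this
    refine this.trans ?_
    rw [Matrix.det_unique]
    rfl
  apply hD.right
  have := dodgson_aux1 A B C D
  simp only [h1]
  rw [Matrix.det_fin_two] at this
  simp only [Fintype.card_fin] at this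
  linear_combination this

theorem dodgson_aux3 {R m : Type*} [CommRing R] [Fintype m]
    [DecidableEq m] (A : Matrix (Fin 2) (Fin 2) R) (B : Matrix (Fin 2) m R)
    (C : Matrix m (Fin 2) R) (D : Matrix m m R) :
    (Matrix.fromBlocks A B C D).det * D.det =
      (dodgsonBorder A B C D 0 0).det * (dodgsonBorder A B C D 1 1).det -
      (dodgsonBorder A B C D 0 1).det * (dodgsonBorder A B C D 1 0).det := by
  have h := dodgson_aux2 (A.map Polynomial.C) (B.map Polynomial.C) (C.map Polynomial.C)
    (Matrix.charmatrix (-D)) (Matrix.charpoly_monic (-D)).isRegular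
  have hD : (Matrix.charmatrix (-D)).map (Polynomial.evalRingHom 0) = D := by
    ext i j
    by_cases hij : i = j
    · subst hij
      simp [Matrix.charmatrix_apply_eq]
    · simp [Matrix.charmatrix_apply_ne _ _ _ hij]
  have h' := congrArg (Polynomial.evalRingHom (0 : R)) h
  have hb : ∀ a b, (dodgsonBorder (A.map Polynomial.C) (B.map Polynomial.C) (C.map Polynomial.C)
      (Matrix.charmatrix (-D)) a b).map (Polynomial.evalRingHom 0) = dodgsonBorder A B C D a b := by
    intro a b
    rw [dodgsonBorder, Matrix.fromBlocks_map, hD]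
    congr 1 <;> (ext i j; simp)
  have hA : (A.map Polynomial.C).map (Polynomial.evalRingHom 0) = A := by ext i j; simp
  have hB : (B.map Polynomial.C).map (Polynomial.evalRingHom 0) = B := by ext i j; simp
  have hC : (C.map Polynomial.C).map (Polynomial.evalRingHom 0) = C := by ext i j; simp
  simpa only [map_mul, map_sub, RingHom.map_det, RingHom.mapMatrix_apply, hb,
    Matrix.fromBlocks_map, hA, hB, hC, hD] using h'

theorem dodgson_identity {R : Type*} [CommRing R] (n : ℕ) (hn : 2 ≤ n)
    (M : Matrix (Fin n) (Fin n) R) :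
    M.det *
      (M.submatrix
        (fun j : Fin (n - 2) => (⟨(j : ℕ) + 2, by have := j.isLt; omega⟩ : Fin n))
        (fun j : Fin (n - 2) => (⟨(j : ℕ) + 2, by have := j.isLt; omega⟩ : Fin n))).det =
    (dodgsonSub n hn M 0 0).det * (dodgsonSub n hn M 1 1).det -
      (dodgsonSub n hn M 0 1).det * (dodgsonSub n hn M 1 0).det := by
  obtain ⟨m, rfl⟩ : ∃ m, n = m + 2 := ⟨n - 2, by omega⟩
  let e : Fin 2 ⊕ Fin m ≃ Fin (m + 2) := finSumFinEquiv.trans (finCongr (Nat.add_comm 2 m))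
  let N := M.submatrix e e
  have h := dodgson_aux3 N.toBlocks₁₁ N.toBlocks₁₂ N.toBlocks₂₁ N.toBlocks₂₂
  rw [Matrix.fromBlocks_toBlocks, Matrix.det_submatrix_equiv_self] at h
  have hl : ∀ a : Fin 2, e (Sum.inl a) = ⟨(a : ℕ), by have := a.isLt; omega⟩ := by
    intro a
    ext
    simp [e]
  have hr : ∀ j : Fin m, e (Sum.inr j) = ⟨(j : ℕ) + 2, by have := j.isLt; omega⟩ := by
    intro j
    ext
    simp [e, Nat.add_comm]
  have hb : ∀ a b, dodgsonBorder N.toBlocks₁₁ N.toBlocks₁₂ N.toBlocks₂₁ N.toBlocks₂₂ a b =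
      dodgsonSub (m + 2) hn M a b := by
    intro a b
    ext (i | i) (j | j) <;>
      simp only [dodgsonBorder, dodgsonSub, N, Matrix.toBlocks₁₁, Matrix.toBlocks₁₂,
        Matrix.toBlocks₂₁, Matrix.toBlocks₂₂, Matrix.fromBlocks_apply₁₁, Matrix.fromBlocks_apply₁₂,
        Matrix.fromBlocks_apply₂₁, Matrix.fromBlocks_apply₂₂, Matrix.submatrix_apply,
        Matrix.of_apply, hl, hr, id] <;> rfl
  have hd : N.toBlocks₂₂ = M.submatrix
      (fun j : Fin m => (⟨(j : ℕ) + 2, by have := j.isLt; omega⟩ : Fin (m + 2)))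
      (fun j : Fin m => (⟨(j : ℕ) + 2, by have := j.isLt; omega⟩ : Fin (m + 2))) := by
    ext i j
    simp only [N, Matrix.toBlocks₂₂, Matrix.submatrix_apply, Matrix.of_apply, hr]
  simp only [hb] at h
  rw [hd] at h
  exact h
end

section
/- Generalized Forest Identity: Fix n ≥ 1, a commutative ring R, edge weights a : V × V → R on V = {0,1,...,n}, and an integer k with 1 ≤ k ≤ n. Then the sum, over all k-tuples (F_1,...,F_k) in which F_1 is a rooted forest on V with root set {0} (a spanning tree rooted at 0) and each of F_2,...,F_k is a rooted forest on V with root set {0,1,...,k}, of the product Π_{i=1}^{k} (weight of F_i), equals the sum, over all k-tuples (F_1,...,F_k) in which F_i is a rooted forest on V with root set {0,...,k}∖{i} for each i and the tuple has no forbidden meta-cycle, of the product Π_{i=1}^{k} (weight of F_i). -/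
open scoped Classical

/-!
STATEMENT 2: The Generalized Forest Identity.

The node set `V = {0, 1, ..., n}` is `Fin (n+1)` (paper node `v` is the `Fin (n+1)`
element of value `v`).  A rooted forest with root set `U` is encoded by its out-edge
function `f : V → V` (with roots as fixed points).  The `k`-tuples of forests are
encoded as functions `F : Fin k → (V → V)`, where the tuple index `i : Fin k`
corresponds to the paper's index `i + 1 ∈ {1, ..., k}`.
-/

/-- A rooted forest on `{0, ..., n}` with root set `U`: `f` fixes exactly the
elements of `U`, and every node reaches `U` under iteration of `f`. -/
def IsRootedForest (n : ℕ) (U : Finset (Fin (n + 1))) (f : Fin (n + 1) → Fin (n + 1)) : Prop :=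
  (∀ r ∈ U, f r = r) ∧ (∀ v, v ∉ U → f v ≠ v) ∧ ∀ v, ∃ m : ℕ, f^[m] v ∈ U

/-- The weight of a rooted forest with root set `U`: the product of the weights of
its edges `v → f v`, `v ∉ U`. -/
def forestWeight {R : Type*} [CommRing R] (n : ℕ) (a : Fin (n + 1) → Fin (n + 1) → R)
    (U : Finset (Fin (n + 1))) (f : Fin (n + 1) → Fin (n + 1)) : R :=
  ∏ v ∈ Uᶜ, a v (f v)

/-- The root set `{0, ..., k} \ {i}` as a finset of `Fin (n+1)` (here `i` is the
paper-level node index). -/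
def rootSetOf (n k i : ℕ) : Finset (Fin (n + 1)) :=
  Finset.univ.filter fun v => (v : ℕ) ≤ k ∧ (v : ℕ) ≠ i

/-- The root set `{0, ..., k}` as a finset of `Fin (n+1)`. -/
def fullRootSet (n k : ℕ) : Finset (Fin (n + 1)) :=
  Finset.univ.filter fun v => (v : ℕ) ≤ k

/-- A `k`-tuple `F` of forests (the `i`-th forest having root set `{0,...,k} \ {i+1}`,
for `i : Fin k`) has a forbidden meta-cycle: there are `m ≥ 2` and distinct indices
`i₁, ..., iₘ ∈ {1, ..., k}` such that, cyclically, node `i_j` is rooted at `i_{j+1}` in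
the `i_j`-th forest (being rooted at `r` means some iterate of the out-edge function
starting from the node reaches `r`). -/
def HasForbiddenMetaCycle (n k : ℕ) (hkn : k ≤ n) (F : Fin k → Fin (n + 1) → Fin (n + 1)) :
    Prop :=
  ∃ (m : ℕ) (_ : 2 ≤ m) (c : Fin m → Fin k), Function.Injective c ∧
    ∀ j : Fin m, ∃ t : ℕ,
      (F (c j))^[t] ⟨(c j : ℕ) + 1, by have := (c j).isLt; omega⟩ =
        (⟨(c ⟨((j : ℕ) + 1) % m, Nat.mod_lt _ (by omega)⟩ : ℕ) + 1,
          by have := (c ⟨((j : ℕ) + 1) % m, Nat.mod_lt _ (by omega)⟩).isLt; omega⟩ : Fin (n + 1))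

open Finset Matrix

namespace GFI

/-- The matrix `1 - P` of a relation `P`. -/
noncomputable def relMat {α : Type} [DecidableEq α] (R : Type*) [CommRing R] (P : α → α → Prop) :
    Matrix α α R :=
  Matrix.of fun u w => (if u = w then 1 else 0) - (if P u w then 1 else 0)

lemma relMat_det_wf {α : Type} [DecidableEq α] [Fintype α] (R : Type*) [CommRing R]
    (P : α → α → Prop) (h : WellFounded (fun w u => P u w)) : (relMat R P).det = 1 := by
  have : IsWellFounded α (fun w u => P u w) := ⟨h⟩
  set rk : α → Ordinalᵒᵈ := fun u => OrderDual.toDual (IsWellFounded.rank (fun w u => P u w) u)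
    with hrk
  have hlt : ∀ u w, P u w → rk u < rk w := by
    intro u w huw
    exact OrderDual.toDual_lt_toDual.2 (IsWellFounded.rank_lt_of_rel (r := fun w u => P u w) huw)
  have hb : (relMat R P).BlockTriangular rk := by
    intro i j hij
    have h1 : i ≠ j := by rintro rfl; exact lt_irrefl _ hij
    have h2 : ¬ P i j := fun hp => lt_asymm hij (hlt _ _ hp)
    simp [relMat, h1, h2]
  rw [hb.det]
  apply Finset.prod_eq_one
  intro x _
  have : (relMat R P).toSquareBlock rk x = 1 := by
    ext ⟨i, hi⟩ ⟨j, hj⟩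
    have h2 : ¬ P i j := fun hp => absurd (hlt _ _ hp) (by rw [hi, hj]; exact lt_irrefl _)
    simp [relMat, Matrix.toSquareBlock_def, h2, Matrix.one_apply]
  rw [this, Matrix.det_one]

lemma relMat_mulVec {α : Type} [DecidableEq α] [Fintype α] (R : Type*) [CommRing R]
    (P : α → α → Prop) (x : α → R) (u : α) :
    (relMat R P *ᵥ x) u = x u - ∑ w, if P u w then x w else 0 := by
  simp [relMat, Matrix.mulVec, dotProduct, sub_mul, Finset.sum_sub_distrib]

lemma det_eq_zero_of_mulVec {α : Type} [DecidableEq α] [Fintype α] {R : Type*} [CommRing R]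
    (M : Matrix α α R) (x : α → R) (h : M *ᵥ x = 0) (u : α) (hu : x u = 1) : M.det = 0 := by
  have h1 : (M.adjugate * M) *ᵥ x = 0 := by rw [← Matrix.mulVec_mulVec, h, Matrix.mulVec_zero]
  rw [Matrix.adjugate_mul, Matrix.smul_mulVec, Matrix.one_mulVec] at h1
  have := congrFun h1 u
  simpa [hu] using this

lemma relMat_det_not_wf {α : Type} [DecidableEq α] [Fintype α] (R : Type*) [CommRing R]
    (P : α → α → Prop) (hP : ∀ u w w', P u w → P u w' → w = w')
    (h : ¬ WellFounded (fun w u => P u w)) : (relMat R P).det = 0 := by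
  have ⟨u0, hu0⟩ : ∃ u, ¬ Acc (fun w u => P u w) u := by
    by_contra! hc
    exact h ⟨hc⟩
  refine det_eq_zero_of_mulVec _ (fun u => if Acc (fun w u => P u w) u then 0 else 1) ?_ u0
    (by simp [hu0])
  ext u
  rw [relMat_mulVec]
  by_cases hu : Acc (fun w u => P u w) u
  · have : ∀ w, (if P u w then (if Acc (fun w u => P u w) w then (0:R) else 1) else 0) = 0 := by
      intro w
      by_cases hw : P u w
      · have := hu.inv (y := w) hw
        simp [this]
      · simp [hw]
    simp [hu, this]
  · have ⟨w, hw, hw'⟩ : ∃ w, P u w ∧ ¬ Acc (fun w u => P u w) w := by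
      by_contra! hc
      exact hu ⟨u, fun y hy => hc y hy⟩
    rw [Finset.sum_eq_single w]
    · simp [hu, hw, hw']
    · intro b _ hb
      rw [if_neg]
      intro hb'
      exact hb (hP _ _ _ hb' hw)
    · simp

lemma det_expand {α β : Type} [DecidableEq α] [Fintype α] [Fintype β] {R : Type*}
    [CommRing R] (c : α → β → R) (r : α → β → α → R) :
    (Matrix.of fun u l => ∑ w, c u w * r u w l).det =
      ∑ f : α → β, (∏ u, c u (f u)) * (Matrix.of fun u l => r u (f u) l).det := by
  have h1 : (Matrix.of fun u l => ∑ w, c u w * r u w l).det =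
      (Matrix.detRowAlternating (n := α) (R := R)).toMultilinearMap
        (fun u => ∑ w, c u w • r u w) := by
    change Matrix.det _ = Matrix.det _
    congr 1
    ext u l
    simp [Finset.sum_apply]
  rw [h1, MultilinearMap.map_sum]
  refine Finset.sum_congr rfl fun f _ => ?_
  rw [MultilinearMap.map_smul_univ]
  rfl

lemma block_det {α : Type} [DecidableEq α] [Fintype α] {R : Type*} [CommRing R] [IsDomain R]
    (k : ℕ) (hk : 1 ≤ k) (e : Fin k → α) (he : Function.Injective e) (M Q : Matrix α α R)
    (hMQ : ∀ v, v ∉ Set.range e → M v = Q v) (hQ : Q.det ≠ 0) :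
    ((M * Q.adjugate).submatrix e e).det = M.det * Q.det ^ (k - 1) := by
  have hrow : ∀ v, v ∉ Set.range e → ∀ l, (M * Q.adjugate) v l = Q.det * (if v = l then 1 else 0) := by
    intro v hv l
    have : (M * Q.adjugate) v l = (Q * Q.adjugate) v l := by
      rw [Matrix.mul_apply, Matrix.mul_apply, hMQ v hv]
    rw [this, Matrix.mul_adjugate]
    simp [Matrix.one_apply]
  obtain ⟨p, hp⟩ : ∃ p : α → Prop, ∀ v, p v ↔ v ∈ Set.range e := ⟨_, fun v => Iff.rfl⟩
  have h1 := Matrix.twoBlockTriangular_det (M * Q.adjugate) p (by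
    intro i hi j hj
    rw [hrow i (fun h => hi ((hp i).2 h)), if_neg, mul_zero]
    rintro rfl
    exact hi hj)
  have h2 : ((M * Q.adjugate).toSquareBlockProp fun i => ¬ p i) = Q.det • 1 := by
    ext ⟨i, hi⟩ ⟨j, hj⟩
    simp [Matrix.toSquareBlockProp, hrow i (fun h => hi ((hp i).2 h)), Matrix.one_apply]
  let E : Fin k ≃ {v // p v} :=
    (Equiv.ofInjective e he).trans (Equiv.subtypeEquivRight fun v => (hp v).symm)
  have h3 : ((M * Q.adjugate).toSquareBlockProp p).det =
      ((M * Q.adjugate).submatrix e e).det := by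
    rw [← Matrix.det_submatrix_equiv_self E]
    rfl
  have hc1 : Fintype.card {i // ¬ p i} = Fintype.card α - k := by
    rw [Fintype.card_subtype_compl, ← Fintype.card_congr E, Fintype.card_fin]
  have hc2 : k ≤ Fintype.card α := by
    simpa using Fintype.card_le_of_injective e he
  rw [h2, h3, Matrix.det_smul, Matrix.det_one, mul_one, hc1, Matrix.det_mul,
    Matrix.det_adjugate] at h1
  have h4 : Fintype.card α - 1 = (k - 1) + (Fintype.card α - k) := by omega
  rw [h4, pow_add, ← mul_assoc] at h1
  exact (mul_right_cancel₀ (pow_ne_zero _ hQ) h1).symm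

/-- Reachability under iteration. -/
def Reach {α : Type} (f : α → α) (v j : α) : Prop := ∃ t : ℕ, f^[t] v = j

lemma iterate_fixed {α : Type} {f : α → α} {u : α} (h : f u = u) (t : ℕ) : f^[t] u = u :=
  Function.iterate_fixed h t

lemma reach_fixed {α : Type} {f : α → α} {u j : α} (h : f u = u) : Reach f u j ↔ u = j := by
  constructor
  · rintro ⟨t, ht⟩
    rw [← ht, iterate_fixed h]
  · rintro rfl
    exact ⟨0, rfl⟩

lemma reach_step {α : Type} {f : α → α} {u j : α} (h : u ≠ j) :
    Reach f u j ↔ Reach f (f u) j := by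
  constructor
  · rintro ⟨t, ht⟩
    cases t with
    | zero => exact absurd ht h
    | succ t => exact ⟨t, ht⟩
  · rintro ⟨t, ht⟩
    exact ⟨t + 1, ht⟩

lemma reach_unique {α : Type} {f : α → α} {v i j : α} (hi : f i = i) (hj : f j = j)
    (h1 : Reach f v i) (h2 : Reach f v j) : i = j := by
  obtain ⟨s, hs⟩ := h1
  obtain ⟨t, ht⟩ := h2
  have e1 : f^[s + t] v = j := by
    rw [Function.iterate_add_apply, ht, iterate_fixed hj]
  have e2 : f^[s + t] v = i := by
    rw [add_comm, Function.iterate_add_apply, hs, iterate_fixed hi]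
  rw [← e1, e2]

/-- The relation attached to a forest function. -/
def fRel {α : Type} (U : Finset α) (f : α → α) (u l : α) : Prop := u ∉ U ∧ l = f u

lemma fRel_wf {α : Type} (U : Finset α) (f : α → α) :
    WellFounded (fun w u => fRel U f u w) ↔ ∀ v, ∃ m : ℕ, f^[m] v ∈ U := by
  constructor
  · intro h v
    induction v using h.induction with
    | _ v ih =>
      by_cases hv : v ∈ U
      · exact ⟨0, hv⟩
      · obtain ⟨m, hm⟩ := ih (f v) ⟨hv, rfl⟩
        exact ⟨m + 1, hm⟩
  · intro h
    refine ⟨fun v => ?_⟩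
    obtain ⟨m, hm⟩ := h v
    induction m generalizing v with
    | zero => exact ⟨_, fun y hy => absurd hm hy.1⟩
    | succ m ih => exact ⟨_, fun y hy => by rw [hy.2]; exact ih _ hm⟩

/-- Row coefficients. -/
noncomputable def coef {R : Type*} [CommRing R] {α : Type} [DecidableEq α] (a : α → α → R)
    (U : Finset α) (u w : α) : R :=
  if u ∈ U then (if w = u then 1 else 0) else a u w

/-- Laplacian with rows in `U` replaced by unit rows. -/
noncomputable def lap {R : Type*} [CommRing R] {α : Type} [DecidableEq α] [Fintype α]
    (a : α → α → R) (U : Finset α) : Matrix α α R :=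
  Matrix.of fun u l => ∑ w, coef a U u w *
    ((if u = l then 1 else 0) - (if u ∉ U ∧ l = w then 1 else 0))

/-- Forest weight extended by zero. -/
noncomputable def wt {R : Type*} [CommRing R] {n : ℕ} (a : Fin (n + 1) → Fin (n + 1) → R)
    (U : Finset (Fin (n + 1))) (f : Fin (n + 1) → Fin (n + 1)) : R :=
  if IsRootedForest n U f then forestWeight n a U f else 0

lemma prod_coef {R : Type*} [CommRing R] {α : Type} [DecidableEq α] [Fintype α]
    (a : α → α → R) (U : Finset α) (f : α → α) :
    ∏ u, coef a U u (f u) = if (∀ r ∈ U, f r = r) then ∏ v ∈ Uᶜ, a v (f v) else 0 := by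
  split_ifs with h
  · rw [← Finset.prod_mul_prod_compl U]
    rw [Finset.prod_eq_one, one_mul]
    · refine Finset.prod_congr rfl fun v hv => ?_
      rw [coef, if_neg (by simpa using hv)]
    · intro v hv
      rw [coef, if_pos hv, if_pos (h v hv)]
  · push Not at h
    obtain ⟨r, hr, hr'⟩ := h
    refine Finset.prod_eq_zero (Finset.mem_univ r) ?_
    rw [coef, if_pos hr, if_neg hr']

lemma isRootedForest_iff {n : ℕ} (U : Finset (Fin (n + 1))) (f : Fin (n + 1) → Fin (n + 1)) :
    IsRootedForest n U f ↔ (∀ r ∈ U, f r = r) ∧ ∀ v, ∃ m : ℕ, f^[m] v ∈ U := by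
  constructor
  · exact fun h => ⟨h.1, h.2.2⟩
  · rintro ⟨h1, h2⟩
    refine ⟨h1, fun v hv hf => ?_, h2⟩
    obtain ⟨m, hm⟩ := h2 v
    rw [iterate_fixed hf] at hm
    exact hv hm

lemma prod_coef_mul_det {R : Type*} [CommRing R] {n : ℕ} (a : Fin (n + 1) → Fin (n + 1) → R)
    (U : Finset (Fin (n + 1))) (f : Fin (n + 1) → Fin (n + 1)) :
    (∏ u, coef a U u (f u)) * (relMat R (fRel U f)).det = wt a U f := by
  rw [prod_coef, wt, isRootedForest_iff]
  by_cases h1 : ∀ r ∈ U, f r = r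
  · by_cases h2 : ∀ v, ∃ m : ℕ, f^[m] v ∈ U
    · rw [relMat_det_wf _ _ ((fRel_wf U f).2 h2), if_pos h1, if_pos ⟨h1, h2⟩, mul_one]
      rfl
    · have hfun : ∀ u w w', fRel U f u w → fRel U f u w' → w = w' := by
        rintro u w w' ⟨_, rfl⟩ ⟨_, rfl⟩
        rfl
      have hd := relMat_det_not_wf R _ hfun (fun h => h2 ((fRel_wf U f).1 h))
      have hn : ¬ ((∀ r ∈ U, f r = r) ∧ ∀ v, ∃ m : ℕ, f^[m] v ∈ U) := fun h => h2 h.2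
      rw [hd, if_neg hn, mul_zero]
  · rw [if_neg h1, if_neg (fun h => h1 h.1), zero_mul]

lemma lap_det {R : Type*} [CommRing R] {n : ℕ} (a : Fin (n + 1) → Fin (n + 1) → R)
    (U : Finset (Fin (n + 1))) : (lap a U).det = ∑ f, wt a U f := by
  rw [lap, det_expand (coef a U)
    (fun u w l => (if u = l then 1 else 0) - (if u ∉ U ∧ l = w then 1 else 0))]
  refine Finset.sum_congr rfl fun f _ => ?_
  rw [← prod_coef_mul_det]
  congr 2
  ext u l
  simp only [relMat, Matrix.of_apply, fRel]
  congr

lemma relMat_adj {R : Type*} [CommRing R] {α : Type} [DecidableEq α] [Fintype α]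
    (U : Finset α) (f : α → α) (hf : ∀ r ∈ U, f r = r) (v j : α) (hj : j ∈ U) :
    (relMat R (fRel U f)).adjugate v j =
      (relMat R (fRel U f)).det * (if Reach f v j then 1 else 0) := by
  set A := relMat R (fRel U f) with hA
  have h1 : A *ᵥ (fun v => if Reach f v j then 1 else 0) = Pi.single j 1 := by
    ext u
    rw [hA, relMat_mulVec]
    by_cases hu : u ∈ U
    · have : ∀ w, ¬ fRel U f u w := fun w hw => hw.1 hu
      simp only [this, if_false, Finset.sum_const_zero, sub_zero, reach_fixed (hf u hu)]
      simp [Pi.single_apply]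
    · have hne : u ≠ j := by rintro rfl; exact hu hj
      simp [fRel, hu, hne, reach_step hne]
  have h2 : (A.adjugate * A) *ᵥ (fun v => if Reach f v j then 1 else 0) =
      A.adjugate *ᵥ Pi.single j 1 := by rw [← Matrix.mulVec_mulVec, h1]
  rw [Matrix.adjugate_mul, Matrix.smul_mulVec, Matrix.one_mulVec] at h2
  have := congrFun h2 v
  simp only [Matrix.mulVec_single_one] at this
  simpa using this.symm

lemma lap_adj {R : Type*} [CommRing R] {n : ℕ} (a : Fin (n + 1) → Fin (n + 1) → R)
    (U : Finset (Fin (n + 1))) (v j : Fin (n + 1)) (hj : j ∈ U) :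
    (lap a U).adjugate v j = ∑ f, wt a U f * (if Reach f v j then 1 else 0) := by
  rw [Matrix.adjugate_apply]
  have h1 : (lap a U).updateRow j (Pi.single v 1) = Matrix.of fun u l => ∑ w, coef a U u w *
      (if u = j then (Pi.single v 1 : Fin (n + 1) → R) l else
        ((if u = l then 1 else 0) - (if u ∉ U ∧ l = w then 1 else 0))) := by
    ext u l
    by_cases hu : u = j
    · subst hu
      simp [coef, hj]
    · simp [hu, lap]
  rw [h1, det_expand (coef a U) (fun u w l => if u = j then (Pi.single v 1 : Fin (n + 1) → R) l else
        ((if u = l then 1 else 0) - (if u ∉ U ∧ l = w then 1 else 0)))]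
  refine Finset.sum_congr rfl fun f _ => ?_
  have h2 : (Matrix.of fun u l => if u = j then (Pi.single v 1 : Fin (n + 1) → R) l else
        ((if u = l then 1 else 0) - (if u ∉ U ∧ l = f u then 1 else 0))) =
      (relMat R (fRel U f)).updateRow j (Pi.single v 1) := by
    ext u l
    by_cases hu : u = j
    · subst hu
      simp
    · simp [hu, relMat, fRel]
      congr
  rw [h2, ← Matrix.adjugate_apply, ← prod_coef_mul_det]
  by_cases hf : ∀ r ∈ U, f r = r
  · rw [relMat_adj U f hf v j hj, mul_assoc]
  · rw [prod_coef, if_neg hf, zero_mul, zero_mul, zero_mul]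

lemma lap_map {R S : Type*} [CommRing R] [CommRing S] (φ : R →+* S) {α : Type} [DecidableEq α]
    [Fintype α] (a : α → α → R) (U : Finset α) :
    φ.mapMatrix (lap a U) = lap (fun u w => φ (a u w)) U := by
  ext u l
  simp only [lap, RingHom.mapMatrix_apply, Matrix.map_apply, Matrix.of_apply, map_sum, map_mul,
    map_sub, coef, apply_ite φ, map_one, map_zero]

lemma sylvester {R : Type*} [CommRing R] {n k : ℕ} (hk : 1 ≤ k)
    (a : Fin (n + 1) → Fin (n + 1) → R) (U₀ U : Finset (Fin (n + 1))) (e : Fin k → Fin (n + 1))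
    (he : Function.Injective e) (h0 : 0 ∈ U) (hU : ∀ v, v ∉ Set.range e → (v ∈ U₀ ↔ v ∈ U)) :
    ((lap a U₀ * (lap a U).adjugate).submatrix e e).det =
      (lap a U₀).det * (lap a U).det ^ (k - 1) := by
  let S := MvPolynomial (Fin (n + 1) × Fin (n + 1)) ℤ
  let b : Fin (n + 1) → Fin (n + 1) → S := fun u w => MvPolynomial.X (u, w)
  have hdet : (lap b U).det ≠ 0 := by
    intro h
    let ψ : S →+* ℤ := MvPolynomial.eval₂Hom (RingHom.id ℤ) (fun p => if p.2 = 0 then 1 else 0)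
    have h1 := congrArg ψ h
    rw [RingHom.map_det, lap_map, map_zero] at h1
    have hψ : ∀ u w, ψ (b u w) = if w = 0 then 1 else 0 :=
      fun u w => MvPolynomial.eval₂Hom_X' _ _ _
    have h2 : lap (fun u w => ψ (b u w)) U = relMat ℤ (fRel U (fun _ => 0)) := by
      ext u l
      by_cases hu : u ∈ U
      · simp [lap, relMat, fRel, coef, hu]
      · simp [lap, relMat, fRel, hψ, coef, hu]
    rw [h2, relMat_det_wf] at h1
    · exact one_ne_zero h1
    · rw [fRel_wf]
      exact fun v => ⟨1, h0⟩
  have key := block_det k hk e he (lap b U₀) (lap b U) (by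
    intro v hv
    ext l
    simp [lap, coef, hU v hv]) hdet
  let φ : S →+* R := MvPolynomial.eval₂Hom (Int.castRingHom R) (fun p => a p.1 p.2)
  have hφ : (fun u w => φ (b u w)) = a := by
    ext u w
    exact MvPolynomial.eval₂Hom_X' _ _ _
  have h3 := congrArg φ key
  rw [map_mul, map_pow, RingHom.map_det, RingHom.map_det, RingHom.map_det, lap_map, lap_map,
    hφ] at h3
  rw [← h3]
  congr 1
  have h4 : φ.mapMatrix (lap b U₀ * (lap b U).adjugate) = lap a U₀ * (lap a U).adjugate := by
    rw [map_mul, RingHom.map_adjugate, lap_map, lap_map, hφ]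
  rw [← h4]
  rfl

lemma agree {α : Type} {f F : α → α} {i w : α} (h : ∀ v, v ≠ i → f v = F v)
    (hr : ¬ Reach f w i) (t : ℕ) : F^[t] w = f^[t] w := by
  induction t with
  | zero => rfl
  | succ t ih =>
    rw [Function.iterate_succ_apply', Function.iterate_succ_apply', ih, h]
    exact fun hc => hr ⟨t, hc⟩

lemma reach_set {α : Type} {f F : α → α} {i : α} (h : ∀ v, v ≠ i → f v = F v) (U : Finset α)
    (hi : i ∈ U) (m : ℕ) (v : α) (hm : F^[m] v ∈ U) : ∃ m', f^[m'] v ∈ U := by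
  induction m generalizing v with
  | zero => exact ⟨0, hm⟩
  | succ m ih =>
    by_cases hv : v = i
    · exact ⟨0, by simpa [hv] using hi⟩
    · obtain ⟨m', hm'⟩ := ih (F v) hm
      exact ⟨m' + 1, by rw [Function.iterate_succ_apply, h v hv]; exact hm'⟩

lemma reach_of_reach {α : Type} {f F : α → α} {i : α} (h : ∀ v, v ≠ i → f v = F v) (v : α)
    (hr : Reach f v i) : Reach F v i := by
  obtain ⟨m, hm⟩ := reach_set (fun v hv => (h v hv).symm) {i} (by simp) hr.choose v
    (by simpa using hr.choose_spec)
  exact ⟨m, by simpa using hm⟩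

lemma upd1 {n : ℕ} {U : Finset (Fin (n + 1))} {f : Fin (n + 1) → Fin (n + 1)}
    {i w : Fin (n + 1)} (hf : IsRootedForest n U f) (hi : i ∈ U) (hr : ¬ Reach f w i) :
    IsRootedForest n (U.erase i) (Function.update f i w) := by
  rw [isRootedForest_iff] at hf ⊢
  obtain ⟨h1, h2⟩ := hf
  have hag : ∀ v, v ≠ i → f v = Function.update f i w v := fun v hv => by simp [hv]
  refine ⟨fun r hr => ?_, fun v => ?_⟩
  · rw [Finset.mem_erase] at hr
    rw [← hag r hr.1, h1 r hr.2]
  · obtain ⟨m, hm⟩ := h2 v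
    obtain ⟨m', hm'⟩ := reach_set (fun v hv => (hag v hv).symm) U hi m v hm
    by_cases hc : (Function.update f i w)^[m'] v = i
    · obtain ⟨t, ht⟩ := h2 w
      refine ⟨t + 1 + m', ?_⟩
      rw [Function.iterate_add_apply, hc, Function.iterate_succ_apply, Function.update_self,
        agree hag hr, Finset.mem_erase]
      exact ⟨fun h => hr ⟨t, h⟩, ht⟩
    · exact ⟨m', Finset.mem_erase.2 ⟨hc, hm'⟩⟩

lemma upd2 {n : ℕ} {U : Finset (Fin (n + 1))} {F : Fin (n + 1) → Fin (n + 1)}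
    {i : Fin (n + 1)} (hF : IsRootedForest n (U.erase i) F) (hi : i ∈ U) :
    IsRootedForest n U (Function.update F i i) ∧ ¬ Reach (Function.update F i i) (F i) i := by
  rw [isRootedForest_iff] at hF ⊢
  obtain ⟨h1, h2⟩ := hF
  have hag : ∀ v, v ≠ i → Function.update F i i v = F v := fun v hv => by simp [hv]
  refine ⟨⟨fun r hr => ?_, fun v => ?_⟩, fun hr => ?_⟩
  · by_cases hri : r = i
    · subst hri; simp
    · rw [hag r hri, h1 r (Finset.mem_erase.2 ⟨hri, hr⟩)]
  · obtain ⟨m, hm⟩ := h2 v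
    exact reach_set hag U hi m v (Finset.mem_of_mem_erase hm)
  · obtain ⟨t, ht⟩ := reach_of_reach hag _ hr
    have hp : Function.IsPeriodicPt F (t + 1) i := ht
    obtain ⟨m, hm⟩ := h2 i
    have hp2 := hp.const_mul m
    have e1 : F^[m * t + m] i = i := hp2
    rw [Function.iterate_add_apply, iterate_fixed (h1 _ hm)] at e1
    rw [e1] at hm
    simp at hm

lemma forestWeight_upd {R : Type*} [CommRing R] {n : ℕ} (a : Fin (n + 1) → Fin (n + 1) → R)
    {U : Finset (Fin (n + 1))} {f : Fin (n + 1) → Fin (n + 1)} {i w : Fin (n + 1)} (hi : i ∈ U) :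
    forestWeight n a (U.erase i) (Function.update f i w) = a i w * forestWeight n a U f := by
  rw [forestWeight, forestWeight, Finset.compl_erase, Finset.prod_insert (by simpa using hi),
    Function.update_self]
  congr 1
  refine Finset.prod_congr rfl fun v hv => ?_
  rw [Function.update_of_ne]
  rintro rfl
  simp [hi] at hv

lemma entry {R : Type*} [CommRing R] {n : ℕ} (a : Fin (n + 1) → Fin (n + 1) → R)
    (U₀ U : Finset (Fin (n + 1))) (i j : Fin (n + 1)) (hi : i ∈ U) (hj : j ∈ U) (hi0 : i ∉ U₀) :
    (lap a U₀ * (lap a U).adjugate) i j = ∑ F, wt a (U.erase i) F *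
      ((if i = j then 1 else 0) - (if i ≠ j ∧ Reach F i j then 1 else 0)) := by
  have h1 : (lap a U₀ * (lap a U).adjugate) i j =
      ∑ w, a i w * ((lap a U).adjugate i j - (lap a U).adjugate w j) := by
    rw [Matrix.mul_apply]
    simp only [lap, Matrix.of_apply, Finset.sum_mul, coef, hi0, if_false, not_false_eq_true,
      true_and, mul_assoc]
    rw [Finset.sum_comm]
    refine Finset.sum_congr rfl fun w _ => ?_
    rw [← Finset.mul_sum]
    congr 1
    simp [sub_mul, Finset.sum_sub_distrib]
  have h2 : (lap a U₀ * (lap a U).adjugate) i j =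
      ∑ p : (Fin (n + 1) → Fin (n + 1)) × Fin (n + 1), a i p.2 * (wt a U p.1 *
        ((if i = j then 1 else 0) - (if Reach p.1 p.2 j then 1 else 0))) := by
    rw [h1, Fintype.sum_prod_type, Finset.sum_comm]
    refine Finset.sum_congr rfl fun w _ => ?_
    rw [lap_adj a U i j hj, lap_adj a U w j hj, ← Finset.sum_sub_distrib, Finset.mul_sum]
    refine Finset.sum_congr rfl fun f _ => ?_
    rw [← mul_sub]
    by_cases hf : IsRootedForest n U f
    · simp only [reach_fixed (hf.1 i hi)]
    · simp [wt, hf]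
  rw [h2]
  rw [← Finset.sum_filter_of_ne
    (p := fun p => IsRootedForest n U p.1 ∧ ¬ Reach p.1 p.2 i),
    ← Finset.sum_filter_of_ne (s := univ) (f := fun F => wt a (U.erase i) F * _)
    (p := fun F => IsRootedForest n (U.erase i) F)]
  · refine Finset.sum_nbij' (fun p => Function.update p.1 i p.2)
      (fun F => (Function.update F i i, F i)) ?_ ?_ ?_ ?_ ?_
    · intro p hp
      simp only [Finset.mem_filter, Finset.mem_univ, true_and] at hp ⊢
      exact upd1 hp.1 hi hp.2
    · intro F hF
      simp only [Finset.mem_filter, Finset.mem_univ, true_and] at hF ⊢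
      exact upd2 hF hi
    · intro p hp
      simp only [Finset.mem_filter, Finset.mem_univ, true_and] at hp
      ext1
      · have := hp.1.1 i hi
        simp only [Function.update_idem]
        conv_lhs => rw [← this]
        rw [this]
        nth_rewrite 2 [← this]
        exact Function.update_eq_self _ _
      · simp
    · intro F hF
      simp
    · intro p hp
      simp only [Finset.mem_filter, Finset.mem_univ, true_and] at hp
      have hF := upd1 hp.1 hi hp.2
      rw [wt, wt, if_pos hp.1, if_pos hF, forestWeight_upd a hi, mul_assoc]
      congr 3
      by_cases hij : i = j
      · subst hij
        simp [hp.2]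
      · have hag : ∀ v, v ≠ i → p.1 v = Function.update p.1 i p.2 v := fun v hv => by simp [hv]
        have : Reach (Function.update p.1 i p.2) i j ↔ Reach p.1 p.2 j := by
          rw [reach_step hij, Function.update_self]
          simp only [Reach, agree hag hp.2]
        simp [hij, this]
  · intro F _ hF
    by_contra hc
    exact hF (by simp [wt, hc])
  · intro p _ hp
    by_contra hc
    apply hp
    by_cases hf : IsRootedForest n U p.1
    · have hr : Reach p.1 p.2 i := by
        by_contra h
        exact hc ⟨hf, h⟩
      have : Reach p.1 p.2 j ↔ i = j :=
        ⟨fun h => reach_unique (hf.1 i hi) (hf.1 j hj) hr h, fun h => h ▸ hr⟩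
      simp [this]
    · simp [wt, hf]

lemma exists_periodic {α : Type} [Finite α] [Nonempty α] (q : α → α) :
    ∃ x, x ∈ Function.periodicPts q := by
  obtain ⟨x⟩ := ‹Nonempty α›
  obtain ⟨s, t, hst, h⟩ := Finite.exists_ne_map_eq_of_infinite (fun t : ℕ => q^[t] x)
  wlog hlt : s < t generalizing s t
  · exact this t s hst.symm h.symm (by omega)
  refine ⟨q^[s] x, Function.mem_periodicPts.2 ⟨t - s, by omega, ?_⟩⟩
  change q^[t - s] (q^[s] x) = q^[s] x
  rw [← Function.iterate_add_apply, Nat.sub_add_cancel hlt.le]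
  exact h.symm

lemma cycle_iff {k : ℕ} (P : Fin k → Fin k → Prop) (hirr : ∀ i, ¬ P i i) :
    (∃ (m : ℕ) (_ : 2 ≤ m) (c : Fin m → Fin k), Function.Injective c ∧
      ∀ j : Fin m, P (c j) (c ⟨((j : ℕ) + 1) % m, Nat.mod_lt _ (by omega)⟩)) ↔
    ¬ WellFounded (fun w u => P u w) := by
  constructor
  · rintro ⟨m, hm, c, -, hc⟩ hwf
    obtain ⟨x, ⟨j, rfl⟩, hx⟩ := hwf.has_min (Set.range c) ⟨_, ⟨⟨0, by omega⟩, rfl⟩⟩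
    exact hx _ ⟨_, rfl⟩ (hc j)
  · intro h
    have ⟨u0, hu0⟩ : ∃ u, ¬ Acc (fun w u => P u w) u := by
      by_contra! hc
      exact h ⟨hc⟩
    have hex : ∀ u : {u // ¬ Acc (fun w u => P u w) u},
        ∃ w : {u // ¬ Acc (fun w u => P u w) u}, P u.1 w.1 := by
      rintro ⟨u, hu⟩
      by_contra! hc
      refine hu ⟨u, fun y hy => ?_⟩
      by_contra hy'
      exact hc ⟨y, hy'⟩ hy
    choose q hq using hex
    have : Nonempty {u // ¬ Acc (fun w u => P u w) u} := ⟨⟨u0, hu0⟩⟩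
    obtain ⟨x, hx⟩ := exists_periodic q
    have hpos := Function.minimalPeriod_pos_of_mem_periodicPts hx
    have hne1 : Function.minimalPeriod q x ≠ 1 := by
      intro h1
      have h2 : q x = x := Function.minimalPeriod_eq_one_iff_isFixedPt.1 h1
      have h3 := hq x
      rw [h2] at h3
      exact hirr _ h3
    refine ⟨Function.minimalPeriod q x, by omega, fun j => (q^[(j : ℕ)] x).1, ?_, ?_⟩
    · intro i j hij
      exact Fin.ext (Function.iterate_injOn_Iio_minimalPeriod i.2 j.2 (Subtype.ext hij))
    · intro j
      simp only [Function.iterate_mod_minimalPeriod_eq]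
      rw [Function.iterate_succ_apply']
      exact hq _

/-- The node attached to a tuple index. -/
def nd {n k : ℕ} (hkn : k ≤ n) (i : Fin k) : Fin (n + 1) :=
  ⟨(i : ℕ) + 1, by have := i.isLt; omega⟩

lemma nd_inj {n k : ℕ} (hkn : k ≤ n) : Function.Injective (nd hkn) := by
  intro i j h
  have := congrArg Fin.val h
  simp only [nd] at this
  exact Fin.ext (by omega)

/-- The meta relation. -/
def metaRel {n k : ℕ} (hkn : k ≤ n) (F : Fin k → Fin (n + 1) → Fin (n + 1)) (i j : Fin k) : Prop :=
  nd hkn i ≠ nd hkn j ∧ Reach (F i) (nd hkn i) (nd hkn j)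

lemma metaCycle_iff {n k : ℕ} (hkn : k ≤ n) (F : Fin k → Fin (n + 1) → Fin (n + 1)) :
    HasForbiddenMetaCycle n k hkn F ↔ ¬ WellFounded (fun w u => metaRel hkn F u w) := by
  rw [← cycle_iff _ (fun i h => h.1 rfl)]
  constructor
  · rintro ⟨m, hm, c, hc, h⟩
    refine ⟨m, hm, c, hc, fun j => ⟨fun he => ?_, h j⟩⟩
    have h1 := congrArg Fin.val (hc (nd_inj hkn he))
    simp only at h1
    have hj := j.2
    rcases Nat.lt_or_ge ((j : ℕ) + 1) m with hlt | hge
    · rw [Nat.mod_eq_of_lt hlt] at h1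
      omega
    · have : (j : ℕ) + 1 = m := by omega
      rw [this, Nat.mod_self] at h1
      omega
  · rintro ⟨m, hm, c, hc, h⟩
    exact ⟨m, hm, c, hc, fun j => (h j).2⟩

lemma rootSetOf_eq {n k : ℕ} (hkn : k ≤ n) (i : Fin k) :
    rootSetOf n k ((i : ℕ) + 1) = (fullRootSet n k).erase (nd hkn i) := by
  ext v
  simp [rootSetOf, fullRootSet, nd, Fin.ext_iff, and_comm]

lemma nd_mem {n k : ℕ} (hkn : k ≤ n) (i : Fin k) : nd hkn i ∈ fullRootSet n k := by
  simp only [fullRootSet, nd, Finset.mem_filter, Finset.mem_univ, true_and]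
  omega

lemma rhs_eq {R : Type*} [CommRing R] {n k : ℕ} (hkn : k ≤ n)
    (a : Fin (n + 1) → Fin (n + 1) → R) :
    ∑ F ∈ Finset.univ.filter (fun F : Fin k → Fin (n + 1) → Fin (n + 1) =>
        (∀ i : Fin k, IsRootedForest n (rootSetOf n k ((i : ℕ) + 1)) (F i)) ∧
        ¬ HasForbiddenMetaCycle n k hkn F),
      ∏ i : Fin k, forestWeight n a (rootSetOf n k ((i : ℕ) + 1)) (F i) =
    ((lap a {0} * (lap a (fullRootSet n k)).adjugate).submatrix (nd hkn) (nd hkn)).det := by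
  have h1 : (lap a {0} * (lap a (fullRootSet n k)).adjugate).submatrix (nd hkn) (nd hkn) =
      Matrix.of fun i j => ∑ F, wt a ((fullRootSet n k).erase (nd hkn i)) F *
      ((if i = j then 1 else 0) -
        (if nd hkn i ≠ nd hkn j ∧ Reach F (nd hkn i) (nd hkn j) then 1 else 0)) := by
    ext i j
    rw [Matrix.submatrix_apply, entry a _ _ _ _ (nd_mem hkn i) (nd_mem hkn j)]
    · simp only [(nd_inj hkn).eq_iff, Matrix.of_apply]
    · simp [nd, Fin.ext_iff]
  rw [h1, det_expand (fun i F => wt a ((fullRootSet n k).erase (nd hkn i)) F)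
    (fun i F j => ((if i = j then 1 else 0) -
        (if nd hkn i ≠ nd hkn j ∧ Reach F (nd hkn i) (nd hkn j) then 1 else 0)))]
  rw [Finset.sum_filter]
  refine Finset.sum_congr rfl fun F _ => ?_
  have h2 : (Matrix.of fun i j => ((if i = j then (1 : R) else 0) -
        (if nd hkn i ≠ nd hkn j ∧ Reach (F i) (nd hkn i) (nd hkn j) then 1 else 0))) =
      relMat R (metaRel hkn F) := by
    ext i j
    simp only [relMat, Matrix.of_apply, metaRel]
    congr
  rw [h2]
  by_cases hF : ∀ i : Fin k, IsRootedForest n (rootSetOf n k ((i : ℕ) + 1)) (F i)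
  · have h3 : ∏ i, wt a ((fullRootSet n k).erase (nd hkn i)) (F i) =
        ∏ i : Fin k, forestWeight n a (rootSetOf n k ((i : ℕ) + 1)) (F i) := by
      refine Finset.prod_congr rfl fun i _ => ?_
      rw [← rootSetOf_eq, wt, if_pos (hF i)]
    rw [h3]
    by_cases hm : HasForbiddenMetaCycle n k hkn F
    · have hfun : ∀ u w w', metaRel hkn F u w → metaRel hkn F u w' → w = w' := by
        intro u w w' hw hw'
        have hFu := hF u
        rw [rootSetOf_eq hkn] at hFu
        refine nd_inj hkn (reach_unique (hFu.1 _ ?_) (hFu.1 _ ?_) hw.2 hw'.2)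
        · exact Finset.mem_erase.2 ⟨hw.1.symm, nd_mem hkn _⟩
        · exact Finset.mem_erase.2 ⟨hw'.1.symm, nd_mem hkn _⟩
      rw [relMat_det_not_wf R _ hfun ((metaCycle_iff hkn F).1 hm), if_neg (fun h => h.2 hm),
        mul_zero]
    · have hwf : WellFounded (fun w u => metaRel hkn F u w) := by
        by_contra h
        exact hm ((metaCycle_iff hkn F).2 h)
      rw [relMat_det_wf R _ hwf, if_pos ⟨hF, hm⟩, mul_one]
  · rw [if_neg (fun h => hF h.1)]
    push Not at hF
    obtain ⟨i, hi⟩ := hF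
    rw [rootSetOf_eq hkn] at hi
    rw [Finset.prod_eq_zero (Finset.mem_univ i), zero_mul]
    rw [wt, if_neg hi]

lemma lhs_eq {R : Type*} [CommRing R] {n k : ℕ} (hk : 1 ≤ k)
    (a : Fin (n + 1) → Fin (n + 1) → R) :
    (∑ F ∈ Finset.univ.filter (fun F : Fin k → Fin (n + 1) → Fin (n + 1) =>
        IsRootedForest n {0} (F ⟨0, hk⟩) ∧
        ∀ i : Fin k, i ≠ ⟨0, hk⟩ → IsRootedForest n (fullRootSet n k) (F i)),
      forestWeight n a {0} (F ⟨0, hk⟩) *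
        ∏ i ∈ Finset.univ.filter (fun i : Fin k => i ≠ ⟨0, hk⟩),
          forestWeight n a (fullRootSet n k) (F i)) =
    (lap a {0}).det * (lap a (fullRootSet n k)).det ^ (k - 1) := by
  set z : Fin k := ⟨0, hk⟩ with hz
  have hsplit : ∀ g : Fin k → R, ∏ i, g i = g z * ∏ i ∈ Finset.univ.filter (fun i => i ≠ z), g i := by
    intro g
    rw [Finset.filter_ne' Finset.univ z, Finset.mul_prod_erase _ _ (Finset.mem_univ z)]
  have hcard : (Finset.univ.filter (fun i : Fin k => i ≠ z)).card = k - 1 := by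
    rw [Finset.filter_ne' Finset.univ z, Finset.card_erase_of_mem (Finset.mem_univ z)]
    simp
  have h1 : (lap a {0}).det * (lap a (fullRootSet n k)).det ^ (k - 1) =
      ∏ i : Fin k, ∑ f, wt a (if i = z then {0} else fullRootSet n k) f := by
    rw [hsplit, if_pos rfl, ← lap_det, ← hcard, ← Finset.prod_const]
    congr 1
    refine Finset.prod_congr rfl fun i hi => ?_
    rw [if_neg (Finset.mem_filter.1 hi).2, lap_det]
  rw [h1, Finset.prod_univ_sum, Fintype.piFinset_univ, Finset.sum_filter]
  refine Finset.sum_congr rfl fun F _ => ?_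
  rw [hsplit, if_pos rfl]
  have h2 : ∏ i ∈ Finset.univ.filter (fun i => i ≠ z),
      wt a (if i = z then {0} else fullRootSet n k) (F i) =
      ∏ i ∈ Finset.univ.filter (fun i => i ≠ z), wt a (fullRootSet n k) (F i) := by
    refine Finset.prod_congr rfl fun i hi => ?_
    rw [if_neg (Finset.mem_filter.1 hi).2]
  rw [h2]
  split_ifs with hF
  · rw [wt, if_pos hF.1]
    congr 1
    refine Finset.prod_congr rfl fun i hi => ?_
    rw [wt, if_pos (hF.2 i (Finset.mem_filter.1 hi).2)]
  · by_cases h0 : IsRootedForest n {0} (F z)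
    · have : ∃ i, i ≠ z ∧ ¬ IsRootedForest n (fullRootSet n k) (F i) := by
        by_contra! hc
        exact hF ⟨h0, hc⟩
      obtain ⟨i, hi, hi'⟩ := this
      rw [Finset.prod_eq_zero (Finset.mem_filter.2 ⟨Finset.mem_univ i, hi⟩), mul_zero]
      rw [wt, if_neg hi']
    · rw [wt, if_neg h0, zero_mul]

lemma main {R : Type*} [CommRing R] {n k : ℕ} (hk : 1 ≤ k) (hkn : k ≤ n)
    (a : Fin (n + 1) → Fin (n + 1) → R) :
    (lap a {0}).det * (lap a (fullRootSet n k)).det ^ (k - 1) =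
    ((lap a {0} * (lap a (fullRootSet n k)).adjugate).submatrix (nd hkn) (nd hkn)).det := by
  rw [sylvester hk a _ _ _ (nd_inj hkn)]
  · simp [fullRootSet]
  · intro v hv
    simp only [fullRootSet, Finset.mem_singleton, Finset.mem_filter, Finset.mem_univ, true_and]
    constructor
    · rintro rfl
      simp
    · intro hle
      by_contra hne
      have hpos : (v : ℕ) ≠ 0 := fun h => hne (Fin.ext h)
      exact hv ⟨⟨(v : ℕ) - 1, by omega⟩, Fin.ext (by simp only [nd]; omega)⟩

end GFI

theorem generalized_forest_identity {R : Type*} [CommRing R] (n k : ℕ)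
    (hn : 1 ≤ n) (hk : 1 ≤ k) (hkn : k ≤ n) (a : Fin (n + 1) → Fin (n + 1) → R) :
    (∑ F ∈ Finset.univ.filter (fun F : Fin k → Fin (n + 1) → Fin (n + 1) =>
        IsRootedForest n {0} (F ⟨0, hk⟩) ∧
        ∀ i : Fin k, i ≠ ⟨0, hk⟩ → IsRootedForest n (fullRootSet n k) (F i)),
      forestWeight n a {0} (F ⟨0, hk⟩) *
        ∏ i ∈ Finset.univ.filter (fun i : Fin k => i ≠ ⟨0, hk⟩),
          forestWeight n a (fullRootSet n k) (F i)) =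
    ∑ F ∈ Finset.univ.filter (fun F : Fin k → Fin (n + 1) → Fin (n + 1) =>
        (∀ i : Fin k, IsRootedForest n (rootSetOf n k ((i : ℕ) + 1)) (F i)) ∧
        ¬ HasForbiddenMetaCycle n k hkn F),
      ∏ i : Fin k, forestWeight n a (rootSetOf n k ((i : ℕ) + 1)) (F i) := by
  rw [GFI.lhs_eq hk a, GFI.rhs_eq hkn a, GFI.main hk hkn a]
end

section
/- Involution Principle (chain form): Let S_0, S_1, ..., S_{m+1} be finite signed sets such that S_0 and S_{m+1} contain only positive elements. Suppose that for each 0 ≤ i ≤ m there is a sign-reversing involution φ_i on the difference S_i − S_{i+1}. Then there exists a bijection between S_0 and S_{m+1}. -/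
/-!
STATEMENT 3: The Involution Principle (chain form).

A signed set is modeled as a finite type `S i` together with a sign function
`sgn i : S i → Bool` (`true` = positive, `false` = negative); this encodes the
partition `S = S⁺ ⊔ S⁻`.  The difference `S_i − S_{i+1}` is the disjoint union
`S i ⊕ S (i+1)` with sign `Sum.elim (sgn i) (fun y => !(sgn (i+1) y))`, i.e.
`(S_i − S_{i+1})⁺ = S_i⁺ ⊔ S_{i+1}⁻` and `(S_i − S_{i+1})⁻ = S_i⁻ ⊔ S_{i+1}⁺`.
A sign-reversing involution on the difference is an involution sending positive
elements to negative ones and vice versa.  The chain is `S 0, S 1, ..., S (m+1)`,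
with the involution `φ i` acting on `S i − S (i+1)` for `0 ≤ i ≤ m`.
-/

theorem involution_principle (m : ℕ) (S : Fin (m + 2) → Type*) [∀ i, Fintype (S i)]
    (sgn : ∀ i : Fin (m + 2), S i → Bool)
    (h0 : ∀ x : S 0, sgn 0 x = true)
    (hlast : ∀ x : S (Fin.last (m + 1)), sgn (Fin.last (m + 1)) x = true)
    (φ : ∀ i : Fin (m + 1), S i.castSucc ⊕ S i.succ → S i.castSucc ⊕ S i.succ)
    (hinv : ∀ i : Fin (m + 1), Function.Involutive (φ i))
    (hrev : ∀ (i : Fin (m + 1)) (x : S i.castSucc ⊕ S i.succ),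
      Sum.elim (sgn i.castSucc) (fun y => !(sgn i.succ y)) (φ i x) =
        !(Sum.elim (sgn i.castSucc) (fun y => !(sgn i.succ y)) x)) :
    Nonempty (S 0 ≃ S (Fin.last (m + 1))) := by
  classical
  -- the signed count of each set
  let w : Bool → ℤ := fun b => if b = true then 1 else -1
  have hw : ∀ b, w (!b) = -w b := by intro b; cases b <;> simp [w]
  let c : Fin (m + 2) → ℤ := fun i => ∑ x : S i, w (sgn i x)
  have hstep : ∀ i : Fin (m + 1), c i.castSucc = c i.succ := by
    intro i
    set f : S i.castSucc ⊕ S i.succ → Bool :=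
      Sum.elim (sgn i.castSucc) (fun y => !(sgn i.succ y)) with hf
    have h1 : ∑ x, w (f (φ i x)) = ∑ x, w (f x) :=
      Equiv.sum_comp (hinv i).toPerm (fun x => w (f x))
    have h2 : ∑ x, w (f (φ i x)) = -∑ x, w (f x) := by
      rw [← Finset.sum_neg_distrib]
      refine Finset.sum_congr rfl fun x _ => ?_
      rw [hf, hrev i x, hw]
    have h3 : ∑ x, w (f x) = c i.castSucc - c i.succ := by
      rw [Fintype.sum_sum_type]
      simp only [hf, Sum.elim_inl, Sum.elim_inr, hw, Finset.sum_neg_distrib, c]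
      ring
    linarith
  have hall : ∀ i : Fin (m + 2), c i = c 0 := by
    intro i
    induction i using Fin.induction with
    | zero => rfl
    | succ i ih => rw [← hstep i, ih]
  have e0 : c 0 = Fintype.card (S 0) := by simp [c, w, h0]
  have e1 : c (Fin.last (m + 1)) = Fintype.card (S (Fin.last (m + 1))) := by
    simp [c, w, hlast]
  have key := hall (Fin.last (m + 1))
  rw [e0, e1] at key
  exact Fintype.card_eq.mp (by exact_mod_cast key.symm)
end

section
/- Let 1 ≤ i ≤ k ≤ n and let j ∈ {0,1,...,k} with j ≠ i. Suppose F is a rooted forest on V = {0,1,...,n} with root set {0,...,k}∖{i}, and suppose that for every root r ∈ {0,...,k}∖{i}, the tree of F rooted at r contains exactly one element of the set {0,...,k}∖{j}. Then node i belongs to the tree rooted at j; that is, the root of node i in F is j. -/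
theorem root_of_special_node (n k i j : ℕ) (hk : 1 ≤ k) (hkn : k ≤ n)
    (hi1 : 1 ≤ i) (hik : i ≤ k) (hjk : j ≤ k) (hji : j ≠ i)
    (F : Fin (n + 1) → Fin (n + 1))
    (hF : IsRootedForest n (rootSetOf n k i) F)
    (htree : ∀ r ∈ rootSetOf n k i,
      ∃! v : Fin (n + 1), ((v : ℕ) ≤ k ∧ (v : ℕ) ≠ j) ∧ ∃ m : ℕ, F^[m] v = r) :
    ∃ m : ℕ, F^[m] (⟨i, by omega⟩ : Fin (n + 1)) = (⟨j, by omega⟩ : Fin (n + 1)) := by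
  obtain ⟨m, hm⟩ := hF.2.2 (⟨i, by omega⟩ : Fin (n + 1))
  refine ⟨m, ?_⟩
  by_contra hne
  have hr := hm
  simp only [rootSetOf, Finset.mem_filter, Finset.mem_univ, true_and] at hr
  have hrj : ((F^[m] (⟨i, by omega⟩ : Fin (n + 1)) : Fin (n + 1)) : ℕ) ≠ j :=
    fun h => hne (Fin.ext h)
  have heq := (htree _ hm).unique (y₁ := (⟨i, by omega⟩ : Fin (n + 1)))
    (y₂ := F^[m] (⟨i, by omega⟩ : Fin (n + 1)))
    ⟨⟨hik, fun h => hji h.symm⟩, m, rfl⟩ ⟨⟨hr.1, hrj⟩, 0, rfl⟩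
  exact hr.2 (congrArg Fin.val heq).symm
end
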